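/- Let r be an indivisible rank vector (gcd of its entries is 1) and M an indecomposable locally free representation of Q over F_q[t]/(t^α) of rank r. Then M is absolutely indecomposable. -/

import Mathlib

/-- A quiver: a set of vertices, a set of arrows, with source and target maps. -/
structure Quiv where
  V : Type
  A : Type
  s : A → V
  t : A → V

/-- The truncated polynomial ring `O_α = K[t]/(t^α)`. -/
abbrev Oalpha (K : Type) [Field K] (α : ℕ) : Type :=
  Polynomial K ⧸ Ideal.span {(Polynomial.X : Polynomial K) ^ α}

/-- A locally free representation (given by matrices `x` over a ring `R`) is
indecomposable if it is nonzero and admits no idempotent endomorphism other than `0`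
and the identity (equivalently, it is not the direct sum of two nonzero
subrepresentations). -/
def IsIndecomposable (Q : Quiv) (r : Q.V → ℕ) (R : Type) [CommRing R]
    (x : ∀ a : Q.A, Matrix (Fin (r (Q.t a))) (Fin (r (Q.s a))) R) : Prop :=
  (∃ i : Q.V, r i ≠ 0) ∧
    ∀ φ : ∀ i : Q.V, Matrix (Fin (r i)) (Fin (r i)) R,
      (∀ a : Q.A, φ (Q.t a) * x a = x a * φ (Q.s a)) →
      (∀ i : Q.V, φ i * φ i = φ i) →
      (∀ i : Q.V, φ i = 0) ∨ (∀ i : Q.V, φ i = 1)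

/-- The ring homomorphism `K[t]/(t^α) → L[t]/(t^α)` induced by a field embedding
`K → L` (base change of truncated polynomial rings). -/
noncomputable def truncBaseChange (K L : Type) [Field K] [Field L] (f : K →+* L)
    (α : ℕ) : Oalpha K α →+* Oalpha L α :=
  Ideal.quotientMap (Ideal.span {(Polynomial.X : Polynomial L) ^ α})
    (Polynomial.mapRingHom f)
    (by rw [← Ideal.map_le_iff_le_comap, Ideal.map_span, Set.image_singleton]
        simp)

/-- A representation over `O_α = F_q[t]/(t^α)` is absolutely indecomposable if its
base change to `F̄_q[t]/(t^α)` is indecomposable. -/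
noncomputable def IsAbsolutelyIndecomposable (K : Type) [Field K] (α : ℕ) (Q : Quiv)
    (r : Q.V → ℕ)
    (x : ∀ a : Q.A, Matrix (Fin (r (Q.t a))) (Fin (r (Q.s a))) (Oalpha K α)) : Prop :=
  IsIndecomposable Q r (Oalpha (AlgebraicClosure K) α)
    (fun a => (x a).map
      (truncBaseChange K (AlgebraicClosure K) (algebraMap K (AlgebraicClosure K)) α))

/-!
Let `u` be an endomorphism of `M`. As `M` is indecomposable, `End M` has no idempotents besides `0`
and `1`, so `p(u) ^ k = 0` for some irreducible `p ∈ K[X]` and some `k`. Reducing modulo `t`, `u`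
acts on `K^(r i)` for every vertex `i` with characteristic polynomial a power of `p`, so `deg p`
divides every `r i`. Hence `deg p = 1`, and `u` is the sum of a scalar and a nilpotent element.

The nilpotent elements therefore lie in the Jacobson radical `J` of `End M`, which is a nilpotent
ideal. Every endomorphism of the base change `M_L` is an `L`-linear combination of endomorphisms of
`M`, so it is a scalar plus an element of the nilpotent ideal `L · J`. An idempotent of this form is
`0` or `1`.
-/

open Polynomial in
theorem sub_dvd_aeval_sub_aeval_of_commute {R A : Type*} [CommRing R] [Ring A] [Algebra R A]
    {a b : A} (h : Commute a b) (p : R[X]) : a - b ∣ aeval a p - aeval b p := by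
  induction p using Polynomial.induction_on' with
  | add p q hp hq =>
    rw [map_add, map_add, add_sub_add_comm]
    exact dvd_add hp hq
  | monomial n c =>
    rw [aeval_monomial, aeval_monomial, ← mul_sub, ← Algebra.smul_def]
    exact dvd_smul_of_dvd c (h.sub_dvd_pow_sub_pow n)

section Matrix

open Matrix Polynomial

variable {n : Type*} [Fintype n] [DecidableEq n]

/- In `Mₙ(R[X])` the characteristic matrix `X - A` divides `p(X) - p(A) = p(X)`; take
determinants. -/
theorem charpoly_dvd_pow_of_aeval_eq_zero {R : Type*} [CommRing R] {A : Matrix n n R} {p : R[X]}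
    (h : aeval A p = 0) : A.charpoly ∣ p ^ Fintype.card n := by
  have hX : aeval (scalar n (X : R[X])) p = scalar n p := by
    simpa using aeval_algHom_apply (scalarAlgHom n R (α := R[X])) X p
  have hA : aeval (A.map C) p = 0 := by
    change aeval ((CAlgHom (R := R)).mapMatrix A) p = 0
    rw [aeval_algHom_apply, h, map_zero]
  have hdvd : charmatrix A ∣ scalar n p := by
    have := sub_dvd_aeval_sub_aeval_of_commute (scalar_commute X (Commute.all X) (A.map C)) p
    rwa [hX, hA, sub_zero] at this
  simpa [charpoly] using map_dvd detMonoidHom hdvd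

theorem natDegree_dvd_card_of_aeval_pow_eq_zero {K : Type*} [Field K] {A : Matrix n n K}
    {p : K[X]} {k : ℕ} (hp : Irreducible p) (h : aeval A (p ^ k) = 0) :
    p.natDegree ∣ Fintype.card n := by
  have hdvd : A.charpoly ∣ p ^ (k * Fintype.card n) := by
    rw [pow_mul]
    exact charpoly_dvd_pow_of_aeval_eq_zero h
  obtain ⟨j, -, hj⟩ := (dvd_prime_pow hp.prime _).1 hdvd
  refine ⟨j, ?_⟩
  rw [← A.charpoly_natDegree_eq_dim,
    natDegree_eq_of_degree_eq (degree_eq_degree_of_associated hj), natDegree_pow, mul_comm]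

end Matrix

section TrivialIdempotents

open Polynomial

variable {K E : Type*} [Ring E]

theorem aeval_eq_zero_or_aeval_eq_zero_of_isCoprime [CommRing K] [Algebra K E]
    (hE : ∀ e : E, IsIdempotentElem e → e = 0 ∨ e = 1) {p q : K[X]} (hpq : IsCoprime p q)
    {u : E} (h : aeval u (p * q) = 0) : aeval u p = 0 ∨ aeval u q = 0 := by
  obtain ⟨a, b, hab⟩ := hpq
  have hadd : aeval u (a * p) + aeval u (b * q) = 1 := by rw [← map_add, hab, map_one]
  have hmul : aeval u (a * p) * aeval u (b * q) = 0 := by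
    rw [← map_mul, mul_mul_mul_comm, map_mul, h, mul_zero]
  rcases hE _ (IsIdempotentElem.of_mul_add hmul hadd).1 with h0 | h1
  · left
    rw [h0, zero_add] at hadd
    rw [← mul_one (aeval u p), ← hadd, ← map_mul, mul_left_comm, map_mul, h, mul_zero]
  · right
    rw [← one_mul (aeval u q), ← h1, ← map_mul, mul_assoc, map_mul, h, mul_zero]

theorem exists_irreducible_aeval_pow_eq_zero [Field K] [Algebra K E] [Nontrivial E]
    (hE : ∀ e : E, IsIdempotentElem e → e = 0 ∨ e = 1) {u : E} (hu : IsIntegral K u) :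
    ∃ (p : K[X]) (k : ℕ), Irreducible p ∧ aeval u (p ^ k) = 0 := by
  obtain ⟨p, hp, hpu⟩ :=
    WfDvdMonoid.exists_irreducible_factor (minpoly.not_isUnit K u) (minpoly.ne_zero hu)
  obtain ⟨q, hq, hpq⟩ := (FiniteMultiplicity.of_not_isUnit hp.not_isUnit
    (minpoly.ne_zero hu)).exists_eq_pow_mul_and_not_dvd
  have hcop : IsCoprime (p ^ multiplicity p (minpoly K u)) q :=
    ((hp.coprime_iff_not_dvd).2 hpq).pow_left
  refine ⟨p, _, hp, (aeval_eq_zero_or_aeval_eq_zero_of_isCoprime hE hcop ?_).resolve_right ?_⟩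
  · rw [← hq, minpoly.aeval]
  · exact fun h => hpq (hpu.trans (minpoly.dvd K u h))

end TrivialIdempotents

section ScalarAddNilpotent

variable {K E : Type*} [Field K] [Ring E] [Algebra K E]

theorem isUnit_of_isNilpotent_sub_algebraMap {c : K} (hc : c ≠ 0) {u : E}
    (hu : IsNilpotent (u - algebraMap K E c)) : IsUnit u := by
  have := hu.isUnit_add_left_of_commute ((IsUnit.mk0 c hc).map (algebraMap K E))
    (Algebra.commutes c _).symm
  rwa [add_sub_cancel] at this

theorem eq_zero_or_eq_one_of_isNilpotent_sub_algebraMap {c : K} {e : E} (he : IsIdempotentElem e)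
    (h : IsNilpotent (e - algebraMap K E c)) : e = 0 ∨ e = 1 := by
  rcases eq_or_ne c 0 with rfl | hc
  · rw [map_zero, sub_zero] at h
    exact .inl (he.eq_zero_of_isNilpotent h)
  · have hu := isUnit_of_isNilpotent_sub_algebraMap hc h
    exact .inr ((IsIdempotentElem.iff_eq_one_of_isUnit hu).1 he)

variable (K E) in
/-- Every element of the `K`-algebra `E` is the sum of a scalar and a nilpotent element. For a
nonzero finite-dimensional algebra this says that `E` is local with residue field `K`. -/
def IsScalarAddNilpotent : Prop :=
  ∀ u : E, ∃ c : K, IsNilpotent (u - algebraMap K E c)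

/- A polynomial `p` with `p(u) ^ k = 0` has degree dividing every dimension `card (n i)`, so `p` is
linear. -/
open Polynomial in
theorem isScalarAddNilpotent_of_gcd_card_eq_one [Algebra.IsIntegral K E] {ι : Type*} [Fintype ι]
    {n : ι → Type*} [∀ i, Fintype (n i)] [∀ i, DecidableEq (n i)]
    (ρ : ∀ i, E →ₐ[K] Matrix (n i) (n i) K)
    (hn : Finset.univ.gcd (fun i => Fintype.card (n i)) = 1)
    (hE : ∀ e : E, IsIdempotentElem e → e = 0 ∨ e = 1) : IsScalarAddNilpotent K E := by
  intro u
  nontriviality E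
  obtain ⟨p, k, hp, hpu⟩ :=
    exists_irreducible_aeval_pow_eq_zero hE (Algebra.IsIntegral.isIntegral (R := K) u)
  have hdvd (i : ι) : p.natDegree ∣ Fintype.card (n i) := by
    refine natDegree_dvd_card_of_aeval_pow_eq_zero (A := ρ i u) (k := k) hp ?_
    rw [aeval_algHom_apply, hpu, map_zero]
  have hdeg : p.natDegree = 1 := Nat.dvd_one.1 (hn ▸ Finset.dvd_gcd fun i _ => hdvd i)
  obtain ⟨c, hc⟩ := exists_root_of_degree_eq_one ((degree_eq_iff_natDegree_eq hp.ne_zero).2 hdeg)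
  have hpc : p ∣ X - C c := (irreducible_X_sub_C c).dvd_symm hp (dvd_iff_isRoot.2 hc)
  refine ⟨c, k, ?_⟩
  have := map_dvd (aeval u) (pow_dvd_pow_of_dvd hpc k)
  simpa [hpu] using this

theorem mem_jacobson_of_isNilpotent (hE : ∀ u : E, IsNilpotent u ∨ IsUnit u) {u : E}
    (hu : IsNilpotent u) : u ∈ Ring.jacobson E := by
  nontriviality E
  have hmul (v : E) : IsNilpotent (v * u) := by
    refine (hE (v * u)).resolve_right fun hvu => ?_
    obtain ⟨n, hn⟩ := hu
    have hreg : IsLeftRegular (u ^ n) := hvu.isRegular.left.of_mul.pow n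
    rw [hn, isLeftRegular_zero_iff_subsingleton] at hreg
    exact not_subsingleton E hreg
  rw [← Ideal.jacobson_bot, Ideal.mem_jacobson_iff]
  intro v
  obtain ⟨w, hw⟩ := (hmul v).isUnit_add_one
  refine ⟨↑w⁻¹, ?_⟩
  have : (↑w⁻¹ : E) * (v * u + 1) = 1 := by rw [← hw, Units.inv_mul]
  rw [Ideal.mem_bot, mul_assoc, ← mul_add_one, this, sub_self]

theorem isNilpotent_of_mem_span_image {R A L : Type*} [Semiring R] [CommSemiring L] [Semiring A]
    [Algebra L A] (f : R →+* A) {I : Ideal R} (hI : IsNilpotent I) {a : A}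
    (ha : a ∈ Submodule.span L (f '' I)) : IsNilpotent a := by
  have hpow (m : ℕ) :
      Submodule.span L (f '' I) ^ m ≤ Submodule.span L (f '' (I ^ m : Ideal R)) := by
    induction m with
    | zero =>
      rw [pow_zero, Submodule.pow_zero, Ideal.one_eq_top, Submodule.one_le]
      exact Submodule.subset_span ⟨1, Submodule.mem_top, map_one f⟩
    | succ m ih =>
      rw [pow_succ, Submodule.pow_succ]
      refine (mul_le_mul_left ih _).trans ?_
      rw [Submodule.span_mul_span, Submodule.span_le]
      rintro _ ⟨_, ⟨x, hx, rfl⟩, _, ⟨y, hy, rfl⟩, rfl⟩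
      exact Submodule.subset_span ⟨x * y, Ideal.mul_mem_mul hx hy, map_mul f x y⟩
  obtain ⟨n, hn⟩ := hI
  refine ⟨n, ?_⟩
  simpa [hn] using hpow n (Submodule.pow_mem_pow _ ha n)

namespace IsScalarAddNilpotent

theorem mem_jacobson (hE : IsScalarAddNilpotent K E) {u : E} (hu : IsNilpotent u) :
    u ∈ Ring.jacobson E := by
  refine mem_jacobson_of_isNilpotent (fun v => ?_) hu
  obtain ⟨c, hc⟩ := hE v
  rcases eq_or_ne c 0 with rfl | h0
  · simpa using Or.inl hc
  · exact .inr (isUnit_of_isNilpotent_sub_algebraMap h0 hc)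

theorem exists_isNilpotent_sub_algebraMap_of_mem_span [IsArtinianRing E]
    (hE : IsScalarAddNilpotent K E) {L A : Type*} [CommRing L] [Ring A] [Algebra K L]
    [Algebra L A] [Algebra K A] [IsScalarTower K L A] (f : E →ₐ[K] A) {a : A}
    (ha : a ∈ Submodule.span L (Set.range f)) :
    ∃ c : L, IsNilpotent (a - algebraMap L A c) := by
  suffices ∃ c : L, a - algebraMap L A c ∈ Submodule.span L (f '' (Ring.jacobson E : Set E)) by
    obtain ⟨c, hc⟩ := this
    exact ⟨c, isNilpotent_of_mem_span_image f.toRingHom IsSemiprimaryRing.isNilpotent hc⟩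
  induction ha using Submodule.span_induction with
  | mem a ha =>
    obtain ⟨u, rfl⟩ := ha
    obtain ⟨c, hc⟩ := hE u
    refine ⟨algebraMap K L c, Submodule.subset_span ⟨_, hE.mem_jacobson hc, ?_⟩⟩
    rw [map_sub, AlgHom.commutes, IsScalarTower.algebraMap_apply K L A]
  | zero => exact ⟨0, by simp⟩
  | add a b _ _ iha ihb =>
    obtain ⟨c, hc⟩ := iha
    obtain ⟨d, hd⟩ := ihb
    exact ⟨c + d, by simpa [add_sub_add_comm] using add_mem hc hd⟩
  | smul l a _ iha =>
    obtain ⟨c, hc⟩ := iha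
    exact ⟨l * c, by simpa [mul_sub, Algebra.smul_def] using Submodule.smul_mem _ l hc⟩

end IsScalarAddNilpotent

end ScalarAddNilpotent

section BaseChange

theorem exists_finset_forall_eq_sum_repr_smul {R M ι κ : Type*} [Semiring R] [AddCommMonoid M]
    [Module R M] [Finite κ] (b : Module.Basis ι R M) (v : κ → M) :
    ∃ T : Finset ι, ∀ k, v k = ∑ j ∈ T, b.repr (v k) j • b j := by
  classical
  cases nonempty_fintype κ
  refine ⟨Finset.univ.biUnion fun k => (b.repr (v k)).support, fun k => ?_⟩
  conv_lhs => rw [← b.linearCombination_repr (v k), Finsupp.linearCombination_apply]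
  exact Finsupp.sum_of_support_subset _
    (Finset.subset_biUnion_of_mem (fun k => (b.repr (v k)).support) (Finset.mem_univ k)) _
    fun j _ => zero_smul R (b j)

theorem isBaseChange_of_basis {R S V W ι : Type*} [CommSemiring R] [CommSemiring S] [Algebra R S]
    [AddCommMonoid V] [Module R V] [AddCommMonoid W] [Module R W] [Module S W]
    [IsScalarTower R S W] (b : Module.Basis ι R V) (c : Module.Basis ι S W) (f : V →ₗ[R] W)
    (hf : ∀ i, f (b i) = c i) : IsBaseChange S f := by
  let e := (b.baseChange S).equiv c (Equiv.refl ι)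
  have he : (e.toLinearMap.restrictScalars R) ∘ₗ TensorProduct.mk R S V 1 = f :=
    b.ext fun i => by simp [e, hf, ← Module.Basis.baseChange_apply]
  exact IsBaseChange.of_equiv e fun v => LinearMap.congr_fun he v

variable {R S l m n : Type*} [CommSemiring R] [CommSemiring S] [Algebra R S] [Fintype m]
  (g : S →ₗ[R] R)

theorem map_mul_map_algebraMap (A : Matrix l m S) (B : Matrix m n R) :
    (A * B.map (algebraMap R S)).map g = A.map g * B := by
  ext i j
  simp only [Matrix.map_apply, Matrix.mul_apply, map_sum]
  refine Finset.sum_congr rfl fun k _ => ?_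
  rw [← Algebra.commutes, ← Algebra.smul_def, map_smul, smul_eq_mul, mul_comm]

theorem map_map_algebraMap_mul (A : Matrix l m R) (B : Matrix m n S) :
    (A.map (algebraMap R S) * B).map g = A * B.map g := by
  ext i j
  simp [Matrix.mul_apply, ← Algebra.smul_def]

end BaseChange

section Representation

variable {Q : Quiv} {r : Q.V → ℕ} {R : Type} [CommRing R]

/-- The algebra of endomorphisms of the representation given by the matrices `x`: the tuples of
square matrices, one for each vertex, commuting with all `x a`. It is regarded as an algebra over
some base `K` of the ring `R` over which the representation is defined. -/
def endAlgebra (K : Type*) [CommSemiring K] [Algebra K R]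
    (x : ∀ a : Q.A, Matrix (Fin (r (Q.t a))) (Fin (r (Q.s a))) R) :
    Subalgebra K (∀ i : Q.V, Matrix (Fin (r i)) (Fin (r i)) R) where
  carrier := {φ | ∀ a, φ (Q.t a) * x a = x a * φ (Q.s a)}
  mul_mem' {φ ψ} hφ hψ a := by
    rw [Pi.mul_apply, Pi.mul_apply, Matrix.mul_assoc, hψ a, ← Matrix.mul_assoc, hφ a,
      Matrix.mul_assoc]
  add_mem' {φ ψ} hφ hψ a := by
    rw [Pi.add_apply, Pi.add_apply, Matrix.add_mul, Matrix.mul_add, hφ a, hψ a]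
  algebraMap_mem' c a := by simp [Algebra.algebraMap_eq_smul_one]

variable {K : Type*} {x : ∀ a : Q.A, Matrix (Fin (r (Q.t a))) (Fin (r (Q.s a))) R}

theorem eq_zero_or_eq_one_of_isIndecomposable [CommSemiring K] [Algebra K R]
    (hx : IsIndecomposable Q r R x)
    {e : endAlgebra K x} (he : IsIdempotentElem e) : e = 0 ∨ e = 1 := by
  have hid (i : Q.V) : (e : ∀ i, Matrix (Fin (r i)) (Fin (r i)) R) i * e.1 i = e.1 i :=
    congrFun (congrArg Subtype.val he) i
  exact (hx.2 e e.2 hid).imp (fun h => Subtype.ext (funext h)) fun h => Subtype.ext (funext h)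

theorem map_mem_endAlgebra [CommSemiring K] [Algebra K R] {L : Type*} {S : Type}
    [CommSemiring L] [CommRing S] [Algebra R S] [Algebra L S] (g : S →ₗ[R] R)
    {φ : ∀ i : Q.V, Matrix (Fin (r i)) (Fin (r i)) S}
    (hφ : φ ∈ endAlgebra L fun a => (x a).map (algebraMap R S)) :
    (fun i => (φ i).map g) ∈ endAlgebra K x := by
  intro a
  rw [← map_mul_map_algebraMap, hφ a, map_map_algebraMap_mul]

variable (K x) in
/-- Extension of scalars of endomorphisms along `R → S`. -/
noncomputable def endAlgebraMap [CommSemiring K] [Algebra K R] (S : Type*) [CommRing S]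
    [Algebra R S] [Algebra K S] [IsScalarTower K R S] :
    endAlgebra K x →ₐ[K] ∀ i : Q.V, Matrix (Fin (r i)) (Fin (r i)) S :=
  (AlgHom.pi fun i =>
    (IsScalarTower.toAlgHom K R S).mapMatrix.comp (Pi.evalAlgHom K _ i)).comp (endAlgebra K x).val

variable [Field K] [Algebra K R]

theorem isScalarAddNilpotent_endAlgebra [Fintype Q.V] [Module.Finite K R] (ε : R →ₐ[K] K)
    (hr : Finset.univ.gcd r = 1) (hx : IsIndecomposable Q r R x) :
    IsScalarAddNilpotent K (endAlgebra K x) :=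
  isScalarAddNilpotent_of_gcd_card_eq_one
    (fun i => ε.mapMatrix.comp ((Pi.evalAlgHom K _ i).comp (endAlgebra K x).val))
    (by simpa using hr) fun _ => eq_zero_or_eq_one_of_isIndecomposable hx

variable {L : Type*} {S : Type} [CommRing S] [Algebra K S] [Algebra R S] [IsScalarTower K R S]

theorem mem_span_range_endAlgebraMap [Finite Q.V] [CommRing L] [Algebra K L] [Algebra L S]
    [IsScalarTower K L S] [Algebra.IsPushout K R L S]
    {φ : ∀ i : Q.V, Matrix (Fin (r i)) (Fin (r i)) S}
    (hφ : φ ∈ endAlgebra L fun a => (x a).map (algebraMap R S)) :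
    φ ∈ Submodule.span L (Set.range (endAlgebraMap K x S)) := by
  let b := Module.Basis.ofVectorSpace K L
  have hbc := Algebra.IsPushout.out (R := K) (S := R) (R' := L) (S' := S)
  let c := hbc.basis b
  have hc (j) : c j = algebraMap L S (b j) := hbc.basis_apply b j
  obtain ⟨T, hT⟩ := exists_finset_forall_eq_sum_repr_smul c
    fun k : Σ i, Fin (r i) × Fin (r i) => φ k.1 k.2.1 k.2.2
  let ψ j : endAlgebra K x := ⟨_, map_mem_endAlgebra (c.coord j) hφ⟩
  have hφψ : φ = ∑ j ∈ T, b j • endAlgebraMap K x S (ψ j) := by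
    funext i
    ext p q
    rw [hT ⟨i, p, q⟩, Finset.sum_apply, Matrix.sum_apply]
    refine Finset.sum_congr rfl fun j _ => ?_
    simp [ψ, endAlgebraMap, hc, Algebra.smul_def, mul_comm]
  rw [hφψ]
  exact sum_mem fun j _ => Submodule.smul_mem _ _ (Submodule.subset_span ⟨ψ j, rfl⟩)

theorem isIndecomposable_map_algebraMap [Fintype Q.V] [Field L] [Algebra K L] [Algebra L S]
    [IsScalarTower K L S] [Algebra.IsPushout K R L S] [Module.Finite K R] (ε : R →ₐ[K] K)
    (hr : Finset.univ.gcd r = 1) (hx : IsIndecomposable Q r R x) :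
    IsIndecomposable Q r S fun a => (x a).map (algebraMap R S) := by
  refine ⟨hx.1, fun φ hφ hid => ?_⟩
  have : IsArtinianRing (endAlgebra K x) := .of_finite K _
  obtain ⟨c, hc⟩ := (isScalarAddNilpotent_endAlgebra ε hr hx)
    |>.exists_isNilpotent_sub_algebraMap_of_mem_span (L := L) (endAlgebraMap K x S)
      (mem_span_range_endAlgebraMap hφ)
  exact (eq_zero_or_eq_one_of_isNilpotent_sub_algebraMap (funext hid) hc).imp congrFun congrFun

end Representation

section TruncatedPolynomial

open Polynomial

/-- The constant term `K[t]/(t^α) → K`. -/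
noncomputable def truncConstantCoeff (K : Type) [Field K] {α : ℕ} (hα : 1 ≤ α) :
    Oalpha K α →ₐ[K] K :=
  Ideal.Quotient.liftₐ _ (aeval 0) fun p hp => by
    obtain ⟨q, rfl⟩ := Ideal.mem_span_singleton.1 hp
    simp [Nat.one_le_iff_ne_zero.1 hα]

/-- The powers `1, t, …, t^(α - 1)` as a basis of `K[t]/(t^α)`. -/
noncomputable def truncBasis (K : Type) [Field K] (α : ℕ) : Module.Basis (Fin α) K (Oalpha K α) :=
  (AdjoinRoot.powerBasis' (monic_X_pow α)).basis.reindex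
    (finCongr ((AdjoinRoot.powerBasis'_dim _).trans (natDegree_X_pow α)))

theorem truncBasis_apply (K : Type) [Field K] (α : ℕ) (i : Fin α) :
    truncBasis K α i = Ideal.Quotient.mk _ (X ^ (i : ℕ)) := by
  have hpow (e) : (AdjoinRoot.powerBasis' (monic_X_pow (R := K) α)).basis.reindex e i =
      AdjoinRoot.mk (X ^ α) X ^ (e.symm i : ℕ) := by
    rw [Module.Basis.reindex_apply, PowerBasis.basis_eq_pow, AdjoinRoot.powerBasis'_gen]
    rfl
  exact (hpow _).trans (map_pow (AdjoinRoot.mk (X ^ α)) X i).symm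

variable (K L : Type) [Field K] [Field L] [Algebra K L] (α : ℕ)

noncomputable local instance algebraTruncBaseChange : Algebra (Oalpha K α) (Oalpha L α) :=
  (truncBaseChange K L (algebraMap K L) α).toAlgebra

theorem truncBaseChange_mk (p : K[X]) :
    truncBaseChange K L (algebraMap K L) α (Ideal.Quotient.mk _ p) =
      Ideal.Quotient.mk _ (p.map (algebraMap K L)) :=
  rfl

local instance isScalarTower_truncBaseChange : IsScalarTower K (Oalpha K α) (Oalpha L α) := by
  refine IsScalarTower.of_algebraMap_eq (R := K) (S := Oalpha K α) (A := Oalpha L α) fun c => ?_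
  refine .trans ?_ (truncBaseChange_mk K L α (C c)).symm
  rw [map_C]
  rfl

theorem isPushout_truncBaseChange : Algebra.IsPushout K L (Oalpha K α) (Oalpha L α) where
  out := isBaseChange_of_basis (truncBasis K α) (truncBasis L α) _ fun i => by
    rw [truncBasis_apply, truncBasis_apply]
    exact (truncBaseChange_mk K L α _).trans (by rw [Polynomial.map_pow, map_X])

theorem absolutely_indecomposable_of_indecomposable_indivisible_general (hα : 1 ≤ α) (Q : Quiv)
    [Fintype Q.V] (r : Q.V → ℕ) (hgcd : Finset.univ.gcd r = 1)
    (x : ∀ a : Q.A, Matrix (Fin (r (Q.t a))) (Fin (r (Q.s a))) (Oalpha K α))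
    (hx : IsIndecomposable Q r (Oalpha K α) x) :
    IsIndecomposable Q r (Oalpha L α)
      (fun a => (x a).map (truncBaseChange K L (algebraMap K L) α)) := by
  have : Module.Finite K (Oalpha K α) := .of_basis (truncBasis K α)
  have := (isPushout_truncBaseChange K L α).symm
  exact isIndecomposable_map_algebraMap (L := L) (truncConstantCoeff K hα) hgcd hx

end TruncatedPolynomial

/-- Let `r` be an indivisible rank vector (the gcd of its entries is
`1`) and `M` an indecomposable locally free representation (given by `x`) of `Q` over
`F_q[t]/(t^α)` of rank vector `r`.  Then `M` is absolutely indecomposable. -/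
theorem absolutely_indecomposable_of_indecomposable_indivisible (K : Type) [Field K]
    [Fintype K] (α : ℕ) (hα : 1 ≤ α) (Q : Quiv) [Fintype Q.V] [Fintype Q.A]
    [DecidableEq Q.V] (r : Q.V → ℕ) (hgcd : Finset.univ.gcd r = 1)
    (x : ∀ a : Q.A, Matrix (Fin (r (Q.t a))) (Fin (r (Q.s a))) (Oalpha K α))
    (hx : IsIndecomposable Q r (Oalpha K α) x) :
    IsAbsolutelyIndecomposable K α Q r x :=
  absolutely_indecomposable_of_indecomposable_indivisible_general K (AlgebraicClosure K) α hα Q r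
    hgcd x hx
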